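/- arXiv:math/0311504 — 6 statements merged into one kernel-verified Lean document; each statement's English description precedes it below -/
import Mathlib

section
/- (Chen–Fox–Lyndon / Lyndon's theorem) Every nonempty word u in X* can be written as a product of Lyndon words u = l_1 l_2 ⋯ l_r with l_1 ≥ l_2 ≥ ⋯ ≥ l_r in the lexicographic order, and this factorization is unique (both the number r and the sequence (l_1, …, l_r) are uniquely determined by u). -/
/-- A word `u` is a Lyndon word if it is nonempty and lexicographically smaller than
each of its proper nonempty suffixes. -/
def IsLyndon {X : Type*} [LinearOrder X] (u : List X) : Prop :=
  u ≠ [] ∧ ∀ v w : List X, v ≠ [] → w ≠ [] → u = v ++ w → List.Lex (· < ·) u w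

/-- `ls` is a Lyndon factorization of `u`: all factors are Lyndon words, the factors are
(lexicographically) nonincreasing, and their concatenation is `u`. -/
def IsLyndonFactorization {X : Type*} [LinearOrder X] (ls : List (List X)) (u : List X) : Prop :=
  (∀ l ∈ ls, IsLyndon l) ∧ ls.Chain' (fun a b => ¬ List.Lex (· < ·) a b) ∧ ls.flatten = u

theorem List.isPrefix_or_append_lt_of_lt {X : Type*} [LinearOrder X] {a b : List X}
    (h : a < b) (c : List X) : a <+: b ∨ a ++ c < b := by
  induction h with
  | nil => exact .inl List.nil_prefix
  | rel h => exact .inr (List.Lex.rel h)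
  | cons _ ih =>
    rcases ih with ih | ih
    · exact .inl (List.prefix_cons_inj _ |>.2 ih)
    · exact .inr (List.Lex.cons ih)

theorem List.le_self_append {X : Type*} [LinearOrder X] (a b : List X) : a ≤ a ++ b := by
  induction a with
  | nil => exact not_lt.1 (List.not_lt_nil _)
  | cons x a ih =>
    refine not_lt.1 fun h => ?_
    cases h with
    | cons h => exact not_lt.2 ih h
    | rel h => exact lt_irrefl _ h

theorem IsLyndon.le_of_suffix {X : Type*} [LinearOrder X] {u s : List X} (hu : IsLyndon u)
    (hs : s ≠ []) (h : s <:+ u) : u ≤ s := by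
  obtain ⟨v, rfl⟩ := h
  rcases eq_or_ne v [] with rfl | hv
  · exact le_rfl
  · exact le_of_lt (hu.2 v s hv hs rfl)

/-- The least nonempty suffix of a word is a Lyndon word. -/
theorem isLyndon_of_le_suffix {X : Type*} [LinearOrder X] {u : List X} (hu : u ≠ [])
    (h : ∀ s, s ≠ [] → s <:+ u → u ≤ s) : IsLyndon u := by
  refine ⟨hu, fun v w hv hw e => lt_of_le_of_ne (h w hw ⟨v, e.symm⟩) fun e' => hv ?_⟩
  have := congrArg List.length e
  rw [e', List.length_append] at this
  exact List.length_eq_zero_iff.1 (by omega)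

/-- Every nonempty suffix of a product of Lyndon words is bounded below by some factor. -/
theorem exists_le_of_suffix_flatten {X : Type*} [LinearOrder X] {ls : List (List X)}
    (hls : ∀ l ∈ ls, IsLyndon l) {s : List X} (hs : s ≠ []) (h : s <:+ ls.flatten) :
    ∃ l ∈ ls, l ≤ s := by
  induction ls with
  | nil => exact absurd (List.suffix_nil.1 h) hs
  | cons a t ih =>
    have suffix_tail : s <:+ t.flatten → ∃ l ∈ a :: t, l ≤ s := fun h => by
      obtain ⟨l, hl, hle⟩ := ih (fun l hl => hls l (List.mem_cons_of_mem _ hl)) h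
      exact ⟨l, List.mem_cons_of_mem _ hl, hle⟩
    obtain ⟨p, hp⟩ := h
    rw [List.flatten_cons, List.append_eq_append_iff] at hp
    rcases hp with ⟨q, rfl, rfl⟩ | ⟨q, rfl, hq⟩
    · rcases eq_or_ne q [] with rfl | hq
      · exact suffix_tail (by simp)
      · exact ⟨_, List.mem_cons_self,
          ((hls _ List.mem_cons_self).le_of_suffix hq ⟨p, rfl⟩).trans (List.le_self_append _ _)⟩
    · exact suffix_tail ⟨q, hq.symm⟩

theorem IsLyndonFactorization.le_of_suffix {X : Type*} [LinearOrder X] {ls : List (List X)}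
    {l u s : List X} (h : IsLyndonFactorization (ls ++ [l]) u) (hs : s ≠ []) (hsu : s <:+ u) :
    l ≤ s := by
  obtain ⟨hl, hc, rfl⟩ := h
  obtain ⟨m, hm, hms⟩ := exists_le_of_suffix_flatten hl hs hsu
  have hc' : (ls ++ [l]).IsChain (· ≥ ·) := hc.imp fun _ _ h => not_lt.1 h
  have hp := List.isChain_iff_pairwise.1 hc'
  rw [List.pairwise_append] at hp
  rcases List.mem_append.1 hm with hm | hm
  · exact le_trans (hp.2.2 m hm l (by simp)) hms
  · rwa [List.mem_singleton.1 hm] at hms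

theorem IsLyndonFactorization.eq_nil {X : Type*} [LinearOrder X] {ls : List (List X)}
    (h : IsLyndonFactorization ls []) : ls = [] :=
  List.eq_nil_iff_forall_not_mem.2 fun l hl =>
    (h.1 l hl).1 (List.flatten_eq_nil_iff.1 h.2.2 l hl)

theorem IsLyndonFactorization.of_append {X : Type*} [LinearOrder X] {ls : List (List X)}
    {l u : List X} (h : IsLyndonFactorization (ls ++ [l]) u) :
    IsLyndonFactorization ls ls.flatten :=
  ⟨fun m hm => h.1 m (List.mem_append_left _ hm), h.2.1.left_of_append, rfl⟩

theorem IsLyndonFactorization.unique {X : Type*} [LinearOrder X] {ls ms : List (List X)}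
    {u : List X} (h : IsLyndonFactorization ls u) (h' : IsLyndonFactorization ms u) :
    ls = ms := by
  induction ls using List.reverseRecOn generalizing ms u with
  | nil =>
    obtain rfl : [] = u := h.2.2
    exact h'.eq_nil.symm
  | append_singleton t l ih =>
    rcases List.eq_nil_or_concat' ms with rfl | ⟨t', l', rfl⟩
    · obtain rfl : [] = u := h'.2.2
      exact h.eq_nil
    · have hu : t.flatten ++ l = u := by simpa using h.2.2
      have hu' : t'.flatten ++ l' = u := by simpa using h'.2.2
      obtain rfl : l = l' := le_antisymm
        (h.le_of_suffix (h'.1 l' (by simp)).1 ⟨_, hu'⟩)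
        (h'.le_of_suffix (h.1 l (by simp)).1 ⟨_, hu⟩)
      have e : t.flatten = t'.flatten := List.append_cancel_right (hu.trans hu'.symm)
      rw [ih h.of_append (e ▸ h'.of_append)]

theorem List.exists_min_suffix {X : Type*} [LinearOrder X] {u : List X} (hu : u ≠ []) :
    ∃ w, w ≠ [] ∧ w <:+ u ∧ ∀ s, s ≠ [] → s <:+ u → w ≤ s := by
  have hfin : {w | w ≠ [] ∧ w <:+ u}.Finite :=
    u.tails.finite_toSet.subset fun w hw => (List.mem_tails _ _).2 hw.2
  obtain ⟨w, hw, hmin⟩ := Set.exists_min_image _ id hfin ⟨u, hu, List.suffix_rfl⟩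
  exact ⟨w, hw.1, hw.2, fun s hs hsu => hmin s ⟨hs, hsu⟩⟩

theorem exists_isLyndonFactorization {X : Type*} [LinearOrder X] (u : List X) :
    ∃ ls, IsLyndonFactorization ls u := by
  induction hn : u.length using Nat.strong_induction_on generalizing u with
  | _ n ih =>
    rcases eq_or_ne u [] with rfl | hu
    · exact ⟨[], by simp, List.isChain_nil, rfl⟩
    obtain ⟨w, hw, ⟨v, rfl⟩, hmin⟩ := List.exists_min_suffix hu
    have hwL : IsLyndon w := isLyndon_of_le_suffix hw fun s hs hsw =>
      hmin s hs (hsw.trans (List.suffix_append _ _))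
    have hlen : v.length < n := by
      have := List.length_pos_iff.2 hw
      rw [List.length_append] at hn
      omega
    obtain ⟨ls, hls, hc, rfl⟩ := ih _ hlen v rfl
    refine ⟨ls ++ [w], ?_, ?_, by simp⟩
    · intro l hl
      rcases List.mem_append.1 hl with hl | hl
      · exact hls l hl
      · rwa [List.mem_singleton.1 hl]
    · refine List.isChain_append.2 ⟨hc, List.isChain_singleton _, ?_⟩
      rintro l hl m hm (hlt : l < m)
      obtain rfl : w = m := by simpa using hm
      obtain ⟨t, rfl⟩ := List.mem_getLast?_eq_getLast hl |> fun ⟨hne, e⟩ =>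
        (⟨ls.dropLast, by rw [e, List.dropLast_append_getLast]⟩ : ∃ t, ls = t ++ [l])
      have hle : w ≤ l ++ w := hmin _ (by simp [hw]) ⟨t.flatten, by simp⟩
      rcases List.isPrefix_or_append_lt_of_lt hlt w with ⟨r, rfl⟩ | h
      · have hr : r ≠ [] := by
          rintro rfl
          simp at hlt
        have hl0 : l ≠ [] := (hls l (by simp)).1
        exact not_lt.2 hle (List.append_left_lt (hwL.2 l r hl0 hr rfl))
      · exact not_lt.2 hle h

/-- Chen–Fox–Lyndon theorem: every nonempty word can be written uniquely as a
nonincreasing product of Lyndon words. -/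
theorem chen_fox_lyndon {X : Type*} [Fintype X] [LinearOrder X] (u : List X) (hu : u ≠ []) :
    ∃! ls : List (List X), IsLyndonFactorization ls u := by
  obtain ⟨ls, hls⟩ := exists_isLyndonFactorization u
  exact ⟨ls, hls, fun _ h => h.unique hls⟩
end

section
/- (Comparison via Lyndon letters) Let u and v be nonempty words with Lyndon decompositions u = l_1 l_2 ⋯ l_r and v = m_1 m_2 ⋯ m_s. Then u < v in the lexicographic order on X* if and only if the sequence (l_1, …, l_r) is smaller than (m_1, …, m_s) in the lexicographic order on finite sequences of words induced by the lexicographic order on X*; that is, if and only if either r < s and l_i = m_i for all 1 ≤ i ≤ r, or there exists an index i with l_j = m_j for all j < i and l_i < m_i lexicographically. -/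
/-- If `x < w`, then either `x` is a proper prefix of `w`, or the comparison is decided at a letter
and hence persists under extending both words. -/
theorem List.exists_append_or_append_lt_append {X : Type*} [LinearOrder X] {x w : List X}
    (h : x < w) : (∃ w', w' ≠ [] ∧ w = x ++ w') ∨ ∀ s t : List X, x ++ s < w ++ t := by
  induction h with
  | @nil a l => exact Or.inl ⟨a :: l, by simp, rfl⟩
  | @cons a l₁ l₂ _ ih =>
    rcases ih with ⟨w', hw', rfl⟩ | ih
    · exact Or.inl ⟨w', hw', rfl⟩
    · exact Or.inr fun s t => List.Lex.cons (ih s t)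
  | rel hab => exact Or.inr fun s t => List.Lex.rel hab

theorem List.nil_lt_of_ne_nil {X : Type*} [LinearOrder X] {w : List X} (hw : w ≠ []) : [] < w := by
  obtain ⟨a, l, rfl⟩ := List.exists_cons_of_ne_nil hw
  exact List.nil_lt_cons a l

/-- A concatenation of words smaller than a Lyndon word `m` is smaller than every nonempty suffix
of `m`. -/
theorem IsLyndon.flatten_lt_of_isSuffix {X : Type*} [LinearOrder X] {m : List X} (hm : IsLyndon m)
    {L : List (List X)} (hL : ∀ x ∈ L, x < m) {w : List X} (hw : w ≠ []) (hwm : w <:+ m) :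
    L.flatten < w := by
  induction L generalizing w with
  | nil => exact List.nil_lt_of_ne_nil hw
  | cons x L ih =>
    obtain ⟨p, hp⟩ := hwm
    have hmw : m ≤ w := by
      rcases eq_or_ne p [] with rfl | hp'
      · simp [← hp]
      · exact le_of_lt (show m < w from hm.2 p w hp' hw hp.symm)
    have hxw : x < w := (hL x (by simp)).trans_le hmw
    rw [List.flatten_cons]
    rcases List.exists_append_or_append_lt_append hxw with ⟨w', hw', rfl⟩ | h
    · exact List.append_left_lt
        (ih (fun y hy => hL y (by simp [hy])) hw' ⟨p ++ x, by simpa using hp⟩)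
    · simpa using h L.flatten []

theorem flatten_lt_flatten_of_lyndon_lt {X : Type*} [LinearOrder X] {ls ms : List (List X)}
    (hls : ls.IsChain (· ≥ ·)) (hms : ∀ m ∈ ms, IsLyndon m) (h : ls < ms) :
    ls.flatten < ms.flatten := by
  induction h with
  | @nil m ms =>
    refine List.nil_lt_of_ne_nil fun h => (hms m (by simp)).1 ?_
    exact List.flatten_eq_nil_iff.1 h m (by simp)
  | @cons l ls ms _ ih =>
    exact List.append_left_lt (ih hls.tail fun m hm => hms m (by simp [hm]))
  | @rel l ls m ms hlm =>
    have hm := hms m (by simp)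
    refine List.Lex.append_right _ _ (hm.flatten_lt_of_isSuffix ?_ hm.1 List.suffix_rfl)
    intro x hx
    rcases List.mem_cons.1 hx with rfl | hx
    · exact hlm
    · exact lt_of_le_of_lt (List.rel_of_pairwise_cons hls.pairwise hx) hlm

theorem IsLyndonFactorization.isChain_ge {X : Type*} [LinearOrder X] {ls : List (List X)}
    {u : List X} (h : IsLyndonFactorization ls u) : ls.IsChain (· ≥ ·) :=
  h.2.1.imp fun _ _ hab => not_lt.1 hab

/-- Comparison of two words in the lexicographic order is equivalent to the comparison
of the sequences of their Lyndon letters, in the lexicographic order on finite sequences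
of words induced by the lexicographic order on words. -/
theorem lex_iff_lex_lyndon_letters {X : Type*} [Fintype X] [LinearOrder X]
    (u v : List X) (hu : u ≠ []) (hv : v ≠ [])
    (ls ms : List (List X))
    (hls : IsLyndonFactorization ls u) (hms : IsLyndonFactorization ms v) :
    List.Lex (· < ·) u v ↔
      List.Lex (fun a b : List X => List.Lex (· < ·) a b) ls ms := by
  change u < v ↔ ls < ms
  have hlt := flatten_lt_flatten_of_lyndon_lt hls.isChain_ge hms.1
  have hgt := flatten_lt_flatten_of_lyndon_lt hms.isChain_ge hls.1
  rw [hls.2.2, hms.2.2] at hlt hgt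
  refine ⟨fun h => ?_, hlt⟩
  rcases lt_trichotomy ls ms with h' | rfl | h'
  · exact h'
  · exact absurd (hls.2.2.symm.trans hms.2.2) h.ne
  · exact absurd (hgt h') h.asymm
end

section
/- Let u and v be Lyndon words with v > u in the lexicographic order. Then for every word a with a ≥ v in the lexicographic order and every word b, the concatenation ab satisfies ab ≫ u. -/
/-- `v ≫ u` : the first Lyndon letter of the Lyndon decomposition of `v` is
lexicographically greater than `u`. -/
def MuchGt {X : Type*} [LinearOrder X] (v u : List X) : Prop :=
  ∃ (l : List X) (t : List (List X)),
    IsLyndonFactorization (l :: t) v ∧ List.Lex (· < ·) u l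

namespace List

variable {X : Type*} [LinearOrder X]

/-- If `l < m`, then either `l` is a proper prefix of `m`, or the two words differ at some position
and the comparison persists under arbitrary extensions. -/
theorem isProperPrefix_or_append_lt_append {l m : List X} (h : l < m) :
    (∃ t, t ≠ [] ∧ m = l ++ t) ∨ ∀ p q, l ++ p < m ++ q := by
  induction h with
  | nil => exact .inl ⟨_, by simp, rfl⟩
  | rel h => exact .inr fun p q => .rel h
  | cons _ ih =>
    rcases ih with ⟨t, ht, rfl⟩ | h
    · exact .inl ⟨t, ht, rfl⟩
    · exact .inr fun p q => .cons (h p q)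

theorem append_lt_append_left_iff {a b : List X} (l : List X) : l ++ a < l ++ b ↔ a < b := by
  induction l with
  | nil => rfl
  | cons x l ih => simpa using ih

theorem le_append_right_of_le {a v : List X} (b : List X) (h : v ≤ a) : v ≤ a ++ b := by
  refine h.trans ?_
  rcases eq_or_ne b [] with rfl | hb
  · simp
  · obtain ⟨x, b, rfl⟩ := exists_cons_of_ne_nil hb
    exact le_of_lt (by simpa using (append_lt_append_left_iff a).2 (show [] < x :: b from .nil))

end List

namespace IsLyndon

variable {X : Type*} [LinearOrder X]

theorem singleton (x : X) : IsLyndon [x] := by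
  refine ⟨by simp, fun v w hv hw h => ?_⟩
  have := congrArg List.length h
  have := List.length_pos_iff.2 hv
  have := List.length_pos_iff.2 hw
  simp at *
  omega

/-- The concatenation of two increasing Lyndon words is smaller than the second one. -/
theorem append_lt {l m : List X} (hl : IsLyndon l) (hm : IsLyndon m) (h : l < m) :
    l ++ m < m := by
  rcases List.isProperPrefix_or_append_lt_append h with ⟨t, ht, rfl⟩ | h
  · exact (List.append_lt_append_left_iff l).2 (hm.2 l t hl.1 ht rfl)
  · simpa using h m []

theorem append {l m : List X} (hl : IsLyndon l) (hm : IsLyndon m) (h : l < m) :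
    IsLyndon (l ++ m) := by
  refine ⟨by simp [hl.1], fun v w hv hw e => ?_⟩
  have key := hl.append_lt hm h
  rcases List.append_eq_append_iff.1 e with ⟨s, rfl, hs⟩ | ⟨s, hs, rfl⟩
  · rcases eq_or_ne s [] with rfl | hs'
    · simpa [hs] using key
    · exact lt_trans key (hm.2 s w hs' hw hs)
  · rcases eq_or_ne s [] with rfl | hs'
    · exact key
    · rcases List.isProperPrefix_or_append_lt_append (hl.2 v s hv hs' hs) with ⟨t, -, ht⟩ | h
      · have h₁ := congrArg List.length hs
        have h₂ := congrArg List.length ht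
        have := List.length_pos_iff.2 hv
        simp only [List.length_append] at h₁ h₂
        omega
      · exact h m m

end IsLyndon

namespace IsLyndonFactorization

variable {X : Type*} [LinearOrder X]

theorem exists_append {ls : List (List X)} : ∀ {w l : List X},
    IsLyndonFactorization ls w → IsLyndon l → ∃ ms, IsLyndonFactorization ms (l ++ w) := by
  induction ls with
  | nil =>
    rintro w l ⟨-, -, rfl⟩ hl
    exact ⟨[l], by simpa using hl, List.isChain_singleton l, by simp⟩
  | cons m ls ih =>
    rintro w l ⟨h, hc, rfl⟩ hl
    by_cases hlm : l < m
    · obtain ⟨ms, hms⟩ := ih ⟨fun k hk => h k (by simp [hk]), hc.tail, rfl⟩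
        (hl.append (h m (by simp)) hlm)
      exact ⟨ms, by simpa using hms⟩
    · exact ⟨l :: m :: ls, List.forall_mem_cons.2 ⟨hl, h⟩, List.isChain_cons_cons.2 ⟨hlm, hc⟩, rfl⟩

/-- Existence in the Chen–Fox–Lyndon theorem. -/
theorem exists_factorization (w : List X) : ∃ ls, IsLyndonFactorization ls w := by
  induction w with
  | nil => exact ⟨[], by simp, List.isChain_nil, rfl⟩
  | cons x w ih =>
    obtain ⟨ls, h⟩ := ih
    exact h.exists_append (IsLyndon.singleton x)

/-- The first Lyndon letter of a word is at least every Lyndon word that the word dominates. -/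
theorem le_head {v : List X} (hv : IsLyndon v) {t : List (List X)} : ∀ {l w : List X},
    IsLyndonFactorization (l :: t) w → v ≤ w → v ≤ l := by
  induction t with
  | nil =>
    rintro l w ⟨-, -, rfl⟩ h
    simpa using h
  | cons m t ih =>
    rintro l w ⟨hL, hc, rfl⟩ h
    by_contra! hlv
    rcases List.isProperPrefix_or_append_lt_append hlv with ⟨x, hx, rfl⟩ | hlt
    · have hvx : l ++ x < x := hv.2 l x (hL l (by simp)).1 hx rfl
      have hxw : x ≤ (m :: t).flatten := by
        rw [List.flatten_cons] at h
        exact not_lt.1 fun hlt => not_lt.2 h ((List.append_lt_append_left_iff l).2 hlt)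
      have hvm := ih ⟨fun k hk => hL k (by simp [hk]), hc.tail, rfl⟩ (hvx.le.trans hxw)
      exact (List.isChain_cons_cons.1 hc).1 (hlv.trans_le hvm)
    · exact not_lt.2 h (by simpa using hlt (m :: t).flatten [])

end IsLyndonFactorization

/-- If `u` and `v` are Lyndon words with `u < v`, then for every word `a ≥ v`
(lexicographically) and every word `b`, the concatenation `a ++ b` satisfies `a ++ b ≫ u`. -/
theorem muchGt_append_of_ge {X : Type*} [Fintype X] [LinearOrder X]
    (u v : List X) (hu : IsLyndon u) (hv : IsLyndon v)
    (huv : List.Lex (· < ·) u v) :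
    ∀ a b : List X, (a = v ∨ List.Lex (· < ·) v a) → MuchGt (a ++ b) u := by
  intro a b hab
  have hva : v ≤ a := hab.elim (fun h => h.ge) fun h => le_of_lt h
  have hvw := List.le_append_right_of_le b hva
  obtain ⟨ls, hls⟩ := IsLyndonFactorization.exists_factorization (a ++ b)
  cases ls with
  | nil =>
    have hw : [] = a ++ b := hls.2.2
    rw [← hw] at hvw
    obtain ⟨x, v, rfl⟩ := List.exists_cons_of_ne_nil hv.1
    exact absurd (show [] < x :: v from .nil) (not_lt.2 hvw)
  | cons l t => exact ⟨l, t, hls, lt_of_lt_of_le huv (hls.le_head hv hvw)⟩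
end

section
/- Let u be a Lyndon word and v a nonempty word with v > u in the lexicographic order and l(v) ≤ l(u). Then v ≫ u. -/
namespace LyndonWord

variable {X : Type*} [LinearOrder X]

/-- If `u < v` then either `u` is a prefix of `v`, or the comparison is decided at a letter
and is insensitive to right multiplication. -/
theorem prefix_or_append_lt {u v : List X} (h : u < v) :
    u <+: v ∨ ∀ s t : List X, u ++ s < v ++ t := by
  change List.Lex (· < ·) u v at h
  induction h with
  | nil => exact Or.inl ⟨_, rfl⟩
  | cons _ ih =>
    rcases ih with ih | ih
    · exact Or.inl (List.cons_prefix_cons.2 ⟨rfl, ih⟩)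
    · exact Or.inr fun s t => List.Lex.cons (ih s t)
  | rel h => exact Or.inr fun s t => List.Lex.rel h

theorem append_lt_append_left_iff (u : List X) {v w : List X} : u ++ v < u ++ w ↔ v < w := by
  induction u with
  | nil => rfl
  | cons a u ih => simp [ih]

theorem isLyndon_iff {u : List X} :
    IsLyndon u ↔ u ≠ [] ∧ ∀ v w : List X, v ≠ [] → w ≠ [] → u = v ++ w → u < w :=
  Iff.rfl

theorem isLyndon_singleton (a : X) : IsLyndon [a] := by
  refine ⟨by simp, fun v w hv hw h => ?_⟩
  have hlen := congrArg List.length h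
  have := List.length_pos_iff.2 hv
  have := List.length_pos_iff.2 hw
  simp at hlen
  omega

theorem append_lt_right {l m : List X} (hl : l ≠ []) (hm : IsLyndon m) (h : l < m) :
    l ++ m < m := by
  rcases prefix_or_append_lt h with ⟨m', rfl⟩ | h'
  · have hm' : m' ≠ [] := by
      rintro rfl
      simp at h
    exact (append_lt_append_left_iff l).2 (isLyndon_iff.1 hm |>.2 l m' hl hm' rfl)
  · simpa using h' m []

/-- The product of two Lyndon words `l < m` is a Lyndon word. -/
theorem isLyndon_append {l m : List X} (hl : IsLyndon l) (hm : IsLyndon m) (h : l < m) :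
    IsLyndon (l ++ m) := by
  rw [isLyndon_iff] at *
  have hlm : l ++ m < m := append_lt_right hl.1 hm h
  refine ⟨by simp [hl.1], fun v w hv hw e => ?_⟩
  rcases List.append_eq_append_iff.1 e with ⟨c, rfl, hc⟩ | ⟨c, rfl, rfl⟩
  · rcases eq_or_ne c [] with rfl | hcne
    · obtain rfl : m = w := hc
      exact hlm
    · exact hlm.trans (hm.2 c w hcne hw hc)
  · rcases eq_or_ne c [] with rfl | hcne
    · exact hlm
    · rcases prefix_or_append_lt (hl.2 v c hv hcne rfl) with hp | hp
      · have hle := hp.length_le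
        have := List.length_pos_iff.2 hv
        rw [List.length_append] at hle
        omega
      · exact hp m m

theorem exists_factorization_append (ls : List (List X)) :
    ∀ (l w : List X), IsLyndon l → IsLyndonFactorization ls w →
      ∃ ls', IsLyndonFactorization ls' (l ++ w) := by
  induction ls with
  | nil =>
    rintro l w hl ⟨-, -, rfl⟩
    exact ⟨[l], by simpa using hl, List.isChain_singleton _, by simp⟩
  | cons m t ih =>
    rintro l w hl ⟨hL, hC, rfl⟩
    by_cases h : l < m
    · obtain ⟨ls', h'⟩ := ih (l ++ m) t.flatten (isLyndon_append hl (hL m (by simp)) h)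
        ⟨fun x hx => hL x (by simp [hx]), hC.tail, rfl⟩
      exact ⟨ls', by simpa using h'⟩
    · refine ⟨l :: m :: t, ?_, List.isChain_cons_cons.2 ⟨h, hC⟩, by simp⟩
      intro x hx
      rcases List.mem_cons.1 hx with rfl | hx
      · exact hl
      · exact hL x hx

/-- Every word has a Lyndon factorization. -/
theorem exists_factorization (w : List X) : ∃ ls, IsLyndonFactorization ls w := by
  induction w with
  | nil => exact ⟨[], by simp, List.isChain_nil, rfl⟩
  | cons a w ih =>
    obtain ⟨ls, h⟩ := ih
    exact exists_factorization_append ls [a] w (isLyndon_singleton a) h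

/-- A suffix `w` of a Lyndon word `u` is at least every product, of length at most
that of `w`, of words that are at most `u`. -/
theorem flatten_le_of_suffix {u : List X} (hu : IsLyndon u) (ls : List (List X))
    (hls : ∀ l ∈ ls, l ≤ u) :
    ∀ w : List X, w <:+ u → ls.flatten.length ≤ w.length → ls.flatten ≤ w := by
  induction ls with
  | nil => exact fun w _ _ => not_lt.1 (List.not_lt_nil w)
  | cons l t ih =>
    intro w hw hlen
    rcases eq_or_ne w [] with rfl | hwne
    · rw [List.eq_nil_of_length_eq_zero (Nat.le_zero.1 hlen)]
    have huw : u ≤ w := by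
      obtain ⟨p, rfl⟩ := hw
      rcases eq_or_ne p [] with rfl | hp
      · simp
      · exact (isLyndon_iff.1 hu |>.2 p w hp hwne rfl).le
    have key : l <+: w ∨ ∀ s t : List X, l ++ s < w ++ t := by
      rcases ((hls l (by simp)).trans huw).eq_or_lt with rfl | h
      · exact Or.inl List.prefix_rfl
      · exact prefix_or_append_lt h
    rcases key with ⟨w', rfl⟩ | h
    · have := ih (fun x hx => hls x (by simp [hx])) w'
        ((List.suffix_append l w').trans hw) (by simpa using hlen)
      rw [List.flatten_cons, ← not_lt, append_lt_append_left_iff]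
      exact this.not_gt
    · simpa using (h t.flatten []).le

end LyndonWord

/-- If `u` is a Lyndon word and `v` a nonempty word with `v > u` lexicographically and
`l(v) ≤ l(u)`, then `v ≫ u`. -/
theorem muchGt_of_gt_of_short {X : Type*} [Fintype X] [LinearOrder X]
    (u v : List X) (hu : IsLyndon u) (hv : v ≠ [])
    (huv : List.Lex (· < ·) u v) (hlen : v.length ≤ u.length) :
    MuchGt v u := by
  obtain ⟨ls, hL, hC, rfl⟩ := LyndonWord.exists_factorization v
  obtain ⟨m, hm, hum⟩ : ∃ m ∈ ls, u < m := by
    by_contra! h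
    exact (LyndonWord.flatten_le_of_suffix hu ls h u List.suffix_rfl hlen).not_gt huv
  cases ls with
  | nil => simp at hm
  | cons l t =>
    refine ⟨l, t, ⟨hL, hC, rfl⟩, ?_⟩
    have hC' : (l :: t).IsChain (· ≥ ·) := hC.imp fun a b h => not_lt.1 h
    rcases List.mem_cons.1 hm with rfl | hmt
    · exact hum
    · exact lt_of_lt_of_le hum (List.rel_of_pairwise_cons hC'.pairwise hmt)
end

section
/- Let u be a Lyndon word and v a nonempty word with v ≫ u. Then for every word b the concatenation vb satisfies vb ≫ u. -/
theorem List.Lex.prefix_or_append {X : Type*} {r : X → X → Prop} {a b : List X}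
    (h : List.Lex r a b) :
    (∃ c, c ≠ [] ∧ b = a ++ c) ∨ ∀ s t, List.Lex r (a ++ s) (b ++ t) := by
  induction h with
  | nil => exact Or.inl ⟨_, List.cons_ne_nil _ _, rfl⟩
  | rel h => exact Or.inr fun _ _ => .rel h
  | cons _ ih =>
    rcases ih with ⟨c, hc, rfl⟩ | ih
    · exact Or.inl ⟨c, hc, rfl⟩
    · exact Or.inr fun s t => .cons (ih s t)

theorem List.Lex.lt_trans {X : Type*} [LinearOrder X] {a b c : List X}
    (hab : List.Lex (· < ·) a b) (hbc : List.Lex (· < ·) b c) : List.Lex (· < ·) a c :=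
  _root_.lt_trans (α := List X) hab hbc

theorem IsLyndon.singleton_s8 {X : Type*} [LinearOrder X] (x : X) : IsLyndon [x] := by
  refine ⟨List.cons_ne_nil _ _, fun v w hv hw h => ?_⟩
  have hlen := congrArg List.length h
  have hv' := List.length_pos_iff.2 hv
  have hw' := List.length_pos_iff.2 hw
  simp only [List.length_append, List.length_singleton] at hlen
  omega

/-- The concatenation of two Lyndon words in increasing order is a Lyndon word. -/
theorem IsLyndon.append_s8 {X : Type*} [LinearOrder X] {a m : List X} (ha : IsLyndon a)
    (hm : IsLyndon m) (h : List.Lex (· < ·) a m) : IsLyndon (a ++ m) := by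
  have ham : List.Lex (· < ·) (a ++ m) m := by
    rcases h.prefix_or_append with ⟨c, hc, hmc⟩ | h
    · have := List.Lex.append_left _ (hm.2 a c ha.1 hc hmc) a
      rwa [← hmc] at this
    · simpa using h m []
  refine ⟨by simp [ha.1], fun v w hv hw hvw => ?_⟩
  rcases List.append_eq_append_iff.1 hvw with ⟨c, rfl, hc⟩ | ⟨c, hac, rfl⟩
  · rcases eq_or_ne c [] with rfl | hc0
    · rw [List.nil_append] at hc
      rwa [← hc]
    · exact ham.lt_trans (hm.2 c w hc0 hw hc)
  · rcases eq_or_ne c [] with rfl | hc0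
    · simpa using ham
    · rcases (ha.2 v c hv hc0 hac).prefix_or_append with ⟨d, _, hd⟩ | h
      · have h₁ := congrArg List.length hac
        have h₂ := congrArg List.length hd
        have hv' := List.length_pos_iff.2 hv
        simp only [List.length_append] at h₁ h₂
        omega
      · exact h m m

/-- Appending a Lyndon word to a factorized word does not decrease the first Lyndon letter. -/
theorem IsLyndonFactorization.exists_append_s8 {X : Type*} [LinearOrder X] (ls : List (List X)) :
    ∀ {v m : List X}, IsLyndonFactorization ls v → IsLyndon m →
      ∃ ls', IsLyndonFactorization ls' (v ++ m) ∧
        ∀ u, (∃ l ∈ ls.head?, List.Lex (· < ·) u l) →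
          ∃ l ∈ ls'.head?, List.Lex (· < ·) u l := by
  induction ls using List.reverseRecOn with
  | nil =>
    rintro v m ⟨-, -, rfl⟩ hm
    exact ⟨[m], ⟨by simpa using hm, List.isChain_singleton _, by simp⟩, by simp⟩
  | append_singleton ls a ih =>
    rintro v m ⟨hl, hc, rfl⟩ hm
    by_cases h : List.Lex (· < ·) a m
    · have ham := (hl a (by simp)).append_s8 hm h
      obtain ⟨ls', hf, hu⟩ := ih
        ⟨fun l hl' => hl l (by simp [hl']), (List.isChain_append.1 hc).1, rfl⟩ ham
      rcases ls with _ | ⟨b, ls⟩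
      · refine ⟨[a ++ m], ⟨by simpa using ham, List.isChain_singleton _, by simp⟩, ?_⟩
        rintro u ⟨l, hl, hul⟩
        obtain rfl : a = l := by simpa using hl
        exact ⟨a ++ m, by simp, List.Lex.append_right _ m hul⟩
      · exact ⟨ls', by simpa using hf, fun u hul => hu u (by simpa using hul)⟩
    · refine ⟨ls ++ [a] ++ [m], ⟨?_, ?_, by simp⟩, ?_⟩
      · intro l hl'
        rcases List.mem_append.1 hl' with hl' | hl'
        · exact hl l hl'
        · rwa [List.mem_singleton.1 hl']
      · exact List.isChain_append.2 ⟨hc, List.isChain_singleton _, by simpa using h⟩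
      · rintro u ⟨l, hl, hul⟩
        exact ⟨l, by cases ls <;> simpa using hl, hul⟩

/-- If `u` is a Lyndon word and `v` a nonempty word with `v ≫ u`, then `v ++ b ≫ u`
for every word `b`. -/
theorem muchGt_append {X : Type*} [Fintype X] [LinearOrder X]
    (u v : List X) (hu : IsLyndon u) (hv : v ≠ []) (hvu : MuchGt v u) :
    ∀ b : List X, MuchGt (v ++ b) u := by
  intro b
  induction b using List.reverseRecOn with
  | nil => simpa using hvu
  | append_singleton b x ih =>
    obtain ⟨l, t, hf, hul⟩ := ih
    obtain ⟨ls, hls, h⟩ := hf.exists_append_s8 _ (IsLyndon.singleton_s8 x)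
    obtain ⟨l', hl', hul'⟩ := h u ⟨l, rfl, hul⟩
    rcases ls with _ | ⟨c, ls⟩
    · simp at hl'
    · obtain rfl : c = l' := by simpa using hl'
      exact ⟨c, ls, by simpa using hls, hul'⟩
end

section
/- Let c be a k-linear endomorphism of V⊗V that is left triangular with respect to X, with diagonal coefficients γ_{x,y}. Then for all words u of length n and v of length m in letters from X: c_{n,m}(u⊗v) − γ_{u,v}·(v⊗u) lies in the subspace k{z : z a word of length m with z > v lexicographically} ⊗ V^{⊗n} of V^{⊗m} ⊗ V^{⊗n}. (In other words, c_{n,m}(u⊗v) ∈ d(u⊗v) + kX^{m}_{>v} ⊗ kX^{n}, where d is the diagonal component of c.) -/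
/-!
We identify the finite-dimensional vector space `V` with basis `X` with the free
`k`-module on `X`, and the tensor power `V^{⊗n}` with the free `k`-module on the
words of length `n` in letters from `X`; correspondingly `V^{⊗n} ⊗ V^{⊗m}` is the
free `k`-module on pairs of words.  A linear endomorphism `c` of `V ⊗ V` is encoded
by its matrix `c : X → X → ((X × X) →₀ k)`, via `c(x ⊗ y) = Σ_{(z,w)} c x y (z,w) • z ⊗ w`.
-/

variable {k : Type*} [Field k] {X : Type*} [Fintype X] [LinearOrder X]

/-- The maps `c_{1,m} : V ⊗ V^{⊗m} → V^{⊗m} ⊗ V`, defined on basis vectors by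
`c_{1,0} = id` and `c_{1,m+1} = (id_V ⊗ c_{1,m}) ∘ (c ⊗ id_{V^{⊗m}})`. -/
noncomputable def braidOne (c : X → X → ((X × X) →₀ k)) :
    X → List X → ((List X × List X) →₀ k)
  | x, [] => Finsupp.single ([], [x]) 1
  | x, y :: v =>
      (c x y).sum fun p a =>
        a • Finsupp.mapDomain (fun q : List X × List X => (p.1 :: q.1, q.2))
          (braidOne c p.2 v)

/-- Auxiliary version of `c_{n,m}` where the first word is given reversed:
`c_{0,m} = id` and `c_{n+1,m} = (c_{n,m} ⊗ id_V) ∘ (id_{V^{⊗n}} ⊗ c_{1,m})`. -/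
noncomputable def braidRev (c : X → X → ((X × X) →₀ k)) :
    List X → List X → ((List X × List X) →₀ k)
  | [], v => Finsupp.single (v, []) 1
  | x :: urev, v =>
      (braidOne c x v).sum fun p a =>
        a • Finsupp.mapDomain (fun q : List X × List X => (q.1, q.2 ++ p.2))
          (braidRev c urev p.1)

/-- The braiding maps `c_{n,m} : V^{⊗n} ⊗ V^{⊗m} → V^{⊗m} ⊗ V^{⊗n}` on basis vectors:
`braidWords c u v` is `c_{l(u),l(v)}(u ⊗ v)`. -/
noncomputable def braidWords (c : X → X → ((X × X) →₀ k)) (u v : List X) :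
    (List X × List X) →₀ k :=
  braidRev c u.reverse v

/-- `c` is left triangular with respect to the ordered basis `X`:
`c(x ⊗ y) = γ_{x,y} • y ⊗ x + Σ_{z > y} z ⊗ v_{x,y,z}`, i.e. the coefficient of
`c(x ⊗ y)` at `z ⊗ w` vanishes unless `(z, w) = (y, x)` or `z > y`. -/
def LeftTriangularMat (c : X → X → ((X × X) →₀ k)) : Prop :=
  ∀ (x y : X) (zw : X × X), c x y zw ≠ 0 → (zw.1 = y ∧ zw.2 = x) ∨ y < zw.1

/-- `c ⊗ id` acting on `V ⊗ V ⊗ V` (matrix form). -/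
noncomputable def act12 (c : X → X → ((X × X) →₀ k)) (f : (X × X × X) →₀ k) :
    (X × X × X) →₀ k :=
  f.sum fun t a => a • ((c t.1 t.2.1).sum fun p b => Finsupp.single (p.1, p.2, t.2.2) b)

/-- `id ⊗ c` acting on `V ⊗ V ⊗ V` (matrix form). -/
noncomputable def act23 (c : X → X → ((X × X) →₀ k)) (f : (X × X × X) →₀ k) :
    (X × X × X) →₀ k :=
  f.sum fun t a => a • ((c t.2.1 t.2.2).sum fun p b => Finsupp.single (t.1, p.1, p.2) b)

/-- `c` satisfies the braid equation
`(c ⊗ id)(id ⊗ c)(c ⊗ id) = (id ⊗ c)(c ⊗ id)(id ⊗ c)`. -/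
def SatisfiesBraidEq (c : X → X → ((X × X) →₀ k)) : Prop :=
  ∀ f : (X × X × X) →₀ k,
    act12 c (act23 c (act12 c f)) = act23 c (act12 c (act23 c f))

/-- The linear extension of `c` to an endomorphism of `V ⊗ V`. -/
noncomputable def extendMat (c : X → X → ((X × X) →₀ k)) (f : (X × X) →₀ k) :
    (X × X) →₀ k :=
  f.sum fun p a => a • c p.1 p.2

/-- The coefficient `γ_{u,v} = Π_{x ∈ u} Π_{y ∈ v} γ x y`. -/
def gammaWords (γ : X → X → k) (u v : List X) : k :=
  (u.map fun x => (v.map fun y => γ x y).prod).prod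

/-- The pairs of words `(z, w)` with `l(z) = l(v)`, `z > v` and `l(w) = n`, indexing a basis of
`k X^{l(v)}_{> v} ⊗ k X^n`. -/
def upperPairs (v : List X) (n : ℕ) : Set (List X × List X) :=
  {p | p.1.length = v.length ∧ List.Lex (· < ·) v p.1 ∧ p.2.length = n}

/-- If `f ∈ a • p₀ + k T`, a linear map sending `T` into `S` and `a • p₀` into `t + S` sends `f`
into `t + S`. -/
theorem Finsupp.sum_smul_sub_mem {R P M : Type*} [Ring R] [AddCommGroup M] [Module R M]
    {S : Submodule R M} {T : Set P} {f : P →₀ R} {g : P → M} {p₀ : P} {a : R} {t : M}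
    (hf : f - a • Finsupp.single p₀ 1 ∈ Finsupp.supported R R T)
    (hg : ∀ p ∈ T, g p ∈ S) (ht : a • g p₀ - t ∈ S) :
    (f.sum fun p b => b • g p) - t ∈ S := by
  have h : Finsupp.linearCombination R g (f - a • Finsupp.single p₀ 1) ∈ S := by
    rw [Finsupp.linearCombination_apply]
    exact S.sum_mem fun p hp => S.smul_mem _ (hg p ((Finsupp.mem_supported R _).1 hf hp))
  have h' := S.add_mem h ht
  rw [map_sub, map_smul, Finsupp.linearCombination_single, one_smul, sub_add_sub_cancel] at h'
  exact h'

theorem Finsupp.mapDomain_mem_supported {R P Q : Type*} [Semiring R] {s : Set P} {t : Set Q}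
    {f : P →₀ R} {φ : P → Q} (hf : f ∈ Finsupp.supported R R s) (hφ : Set.MapsTo φ s t) :
    Finsupp.mapDomain φ f ∈ Finsupp.supported R R t := by
  classical
  rw [Finsupp.mem_supported] at hf ⊢
  intro q hq
  obtain ⟨p, hp, rfl⟩ := Finset.mem_image.1 (Finsupp.mapDomain_support hq)
  exact hφ (hf hp)

/-- If `f ∈ a • p₀ + k s` and `φ` maps `p₀` and `s` into `t`, then `φ` maps `f` into `k t`. -/
theorem Finsupp.mapDomain_mem_supported_of_sub {R P Q : Type*} [Ring R] {s : Set P} {t : Set Q}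
    {f : P →₀ R} {φ : P → Q} {p₀ : P} {a : R}
    (hf : f - a • Finsupp.single p₀ 1 ∈ Finsupp.supported R R s)
    (hφ : Set.MapsTo φ s t) (hp₀ : φ p₀ ∈ t) :
    Finsupp.mapDomain φ f ∈ Finsupp.supported R R t := by
  refine Finsupp.mapDomain_mem_supported (s := φ ⁻¹' t) ?_ fun _ h => h
  rw [← sub_add_cancel f (a • Finsupp.single p₀ 1)]
  exact add_mem (Finsupp.supported_mono hφ hf)
    (Submodule.smul_mem _ _ (Finsupp.single_mem_supported R 1 hp₀))

/-- If `f ∈ b • p₀ + k s`, then `a • φ(f) ∈ (a * b) • φ(p₀) + k t` for `φ` mapping `s` into `t`. -/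
theorem Finsupp.smul_mapDomain_sub_mem_supported {R P Q : Type*} [Ring R] {s : Set P} {t : Set Q}
    {f : P →₀ R} {φ : P → Q} {p₀ : P} (a : R) {b : R}
    (hf : f - b • Finsupp.single p₀ 1 ∈ Finsupp.supported R R s) (hφ : Set.MapsTo φ s t) :
    a • Finsupp.mapDomain φ f - (a * b) • Finsupp.single (φ p₀) 1 ∈ Finsupp.supported R R t := by
  have h := Submodule.smul_mem _ a (Finsupp.mapDomain_mem_supported hf hφ)
  rw [← Finsupp.lmapDomain_apply R R, map_sub, map_smul, Finsupp.lmapDomain_apply,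
    Finsupp.lmapDomain_apply, Finsupp.mapDomain_single, smul_sub, smul_smul] at h
  exact h

theorem LeftTriangularMat.sub_mem_supported {X : Type*} [LinearOrder X]
    {c : X → X → ((X × X) →₀ k)}
    (htri : LeftTriangularMat c) (x y : X) :
    c x y - c x y (y, x) • Finsupp.single (y, x) 1 ∈
      Finsupp.supported k k {p : X × X | y < p.1} := by
  rw [Finsupp.mem_supported']
  rintro ⟨z, w⟩ hz
  by_cases h : (z, w) = (y, x)
  · simp [h]
  · have h0 : c x y (z, w) = 0 := by
      by_contra h0
      rcases htri x y (z, w) h0 with ⟨rfl, rfl⟩ | h1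
      exacts [h rfl, hz h1]
    simp [h0, Finsupp.single_eq_of_ne h]

theorem braidOne_triangular {X : Type*} [LinearOrder X]
    {c : X → X → ((X × X) →₀ k)} (htri : LeftTriangularMat c)
    (v : List X) (x : X) :
    braidOne c x v - (v.map fun y => c x y (y, x)).prod • Finsupp.single (v, [x]) 1 ∈
      Finsupp.supported k k (upperPairs v 1) := by
  induction v generalizing x with
  | nil => simp [braidOne]
  | cons y v ih =>
    rw [braidOne, List.map_cons, List.prod_cons]
    refine Finsupp.sum_smul_sub_mem (htri.sub_mem_supported x y) (fun p hp => ?_) ?_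
    · refine Finsupp.mapDomain_mem_supported_of_sub (ih p.2) (fun q hq => ?_) ?_
      · exact ⟨by simp [hq.1], List.Lex.rel hp, hq.2.2⟩
      · exact ⟨by simp, List.Lex.rel hp, rfl⟩
    · have hφ : Set.MapsTo (fun q : List X × List X => (y :: q.1, q.2))
          (upperPairs v 1) (upperPairs (y :: v) 1) := fun q hq =>
        ⟨by simp [hq.1], List.Lex.cons hq.2.1, hq.2.2⟩
      have h := Finsupp.smul_mapDomain_sub_mem_supported (c x y (y, x)) (ih x) hφ
      exact h

theorem braidRev_triangular {X : Type*} [LinearOrder X]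
    {c : X → X → ((X × X) →₀ k)} (htri : LeftTriangularMat c)
    (u v : List X) :
    braidRev c u v - gammaWords (fun x y => c x y (y, x)) u v • Finsupp.single (v, u.reverse) 1 ∈
      Finsupp.supported k k (upperPairs v u.length) := by
  induction u generalizing v with
  | nil => simp [braidRev, gammaWords]
  | cons x u ih =>
    rw [braidRev, gammaWords, List.map_cons, List.prod_cons, List.reverse_cons]
    refine Finsupp.sum_smul_sub_mem (braidOne_triangular htri v x) (fun p hp => ?_) ?_
    · refine Finsupp.mapDomain_mem_supported_of_sub (ih p.1) (fun q hq => ?_) ?_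
      · exact ⟨hq.1.trans hp.1, List.lt_trans (α := X) hp.2.1 hq.2.1, by simp [hq.2.2, hp.2.2]⟩
      · exact ⟨hp.1, hp.2.1, by simp [hp.2.2]⟩
    · have hφ : Set.MapsTo (fun q : List X × List X => (q.1, q.2 ++ [x]))
          (upperPairs v u.length) (upperPairs v (x :: u).length) := fun q hq =>
        ⟨hq.1, hq.2.1, by simp [hq.2.2]⟩
      have h := Finsupp.smul_mapDomain_sub_mem_supported
        (v.map fun y => c x y (y, x)).prod (ih v) hφ
      exact h

/-- If `c` is left triangular with respect to `X` with diagonal coefficients `γ`, then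
for all words `u, v`:
`c_{l(u),l(v)}(u ⊗ v) ∈ γ_{u,v} • (v ⊗ u) + k X^{l(v)}_{> v} ⊗ k X^{l(u)}`. -/
theorem braidWords_triangular
    (c : X → X → ((X × X) →₀ k)) (γ : X → X → k)
    (hγ : ∀ x y : X, γ x y = c x y (y, x))
    (htri : LeftTriangularMat c)
    (u v : List X) :
    braidWords c u v - gammaWords γ u v • Finsupp.single (v, u) 1 ∈
      Submodule.span k {f : (List X × List X) →₀ k |
        ∃ z w : List X, z.length = v.length ∧ List.Lex (· < ·) v z ∧
          w.length = u.length ∧ f = Finsupp.single (z, w) 1} := by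
  obtain rfl : γ = fun x y => c x y (y, x) := funext₂ hγ
  have h := braidRev_triangular htri u.reverse v
  have hrev : gammaWords (fun x y => c x y (y, x)) u.reverse v =
      gammaWords (fun x y => c x y (y, x)) u v :=
    ((List.reverse_perm u).map _).prod_eq
  rw [hrev, List.reverse_reverse, List.length_reverse, Finsupp.supported_eq_span_single] at h
  refine Submodule.span_mono ?_ h
  rintro _ ⟨⟨z, w⟩, ⟨hz, hlex, hw⟩, rfl⟩
  exact ⟨z, w, hz, hlex, hw, rfl⟩
end
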